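/- arXiv:math/0002231 — 6 statements merged into one kernel-verified Lean document; each statement's English description precedes it below -/
import Mathlib

section
/- Let p be a prime and let v : ZMod p → ℤ. Let A = Matrix.circulant v be the p×p integer circulant matrix with entries A i j = v (i - j). Then det A ≡ Σ_{k ∈ ZMod p} v k (mod p), i.e. the determinant of A is congruent modulo p to the sum of the entries of any single row of A. -/
/-!
Over `ZMod p`, the matrix `A = circulant v` is a linear combination `∑ k, v k • C ^ k` of powers of
the cyclic shift matrix `C`, and these powers commute. Raising to the `p`-th power is therefore
additive on them, and since `C ^ p = 1`, Fermat's little theorem gives `A ^ p = s • 1` with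
`s = ∑ k, v k`. Taking determinants, `(det A) ^ p = s ^ p`, and Fermat's little theorem
once more gives `det A = s`.
-/

/-- A scaled power of the cyclic shift is encoded as the circulant of a vector supported at a single
index; multiplying such matrices adds indices and multiplies coefficients. -/
lemma circulant_single_pow (p : ℕ) [Fact p.Prime] (k c : ZMod p) (m : ℕ) :
    Matrix.circulant (Pi.single k c : ZMod p → ZMod p) ^ m
      = Matrix.circulant (Pi.single (m • k) (c ^ m)) := by
  induction m with
  | zero => simp
  | succ m ih =>
    rw [pow_succ, ih, Matrix.circulant_mul]
    congr 1
    ext i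
    rw [Matrix.mulVec_single]
    simp only [Matrix.col_apply, Matrix.circulant_apply, Pi.smul_apply, Pi.single_apply,
      MulOpposite.smul_eq_mul_unop, MulOpposite.unop_op, succ_nsmul, pow_succ, sub_eq_iff_eq_add]
    split_ifs <;> simp

/-- The `p`-th power map is additive on circulants over `ZMod p`, and `p • k = 0` turns every
monomial into a scalar. The sum over a general finset allows an induction. -/
lemma circulant_sum_single_pow (p : ℕ) [Fact p.Prime] (w : ZMod p → ZMod p)
    (s : Finset (ZMod p)) :
    Matrix.circulant (∑ k ∈ s, (Pi.single k (w k) : ZMod p → ZMod p)) ^ p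
      = Matrix.scalar (ZMod p) (∑ k ∈ s, w k) := by
  induction s using Finset.induction_on with
  | empty =>
    simp [Matrix.circulant_zero, (Fact.out : p.Prime).ne_zero]
  | insert a s ha ih =>
    have hc : Commute (Matrix.circulant (Pi.single a (w a) : ZMod p → ZMod p))
        (Matrix.circulant (∑ k ∈ s, (Pi.single k (w k) : ZMod p → ZMod p))) :=
      Matrix.circulant_mul_comm _ _
    rw [Finset.sum_insert ha, Finset.sum_insert ha, Matrix.circulant_add,
      add_pow_char_of_commute p hc, ih,
      circulant_single_pow, map_add]
    simp [ZMod.pow_card, Matrix.circulant_single]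

/-- For a prime `p`, the determinant of a `p × p` integer circulant matrix is
congruent mod `p` to the sum of the entries of a single row (Lemma 2.6 of
Przytycki–Sokolov combined with Fermat's little theorem). -/
theorem circulant_det_mod_prime (p : ℕ) [Fact p.Prime] (v : ZMod p → ℤ) :
    (Matrix.circulant v).det ≡ ∑ k : ZMod p, v k [ZMOD (p : ℤ)] := by
  rw [← ZMod.intCast_eq_intCast_iff, Int.cast_det, Int.cast_sum]
  have h := congrArg Matrix.det
    (circulant_sum_single_pow p (fun k => (v k : ZMod p)) Finset.univ)
  rw [Finset.univ_sum_single, Matrix.det_pow, ZMod.pow_card, Matrix.scalar_apply,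
    Matrix.det_diagonal, Finset.prod_const, Finset.card_univ, ZMod.card, ZMod.pow_card] at h
  simpa [Matrix.map_circulant] using h
end

section
/- Let p be an odd prime and let v : ZMod p → ZMod p satisfy v (-k) = v k for all k (so that the circulant matrix A = Matrix.circulant v, with entries A i j = v (i - j), is a symmetric p×p matrix over the field ZMod p). Suppose moreover that Σ_{k ∈ ZMod p} v k = 0. Then the vector w : ZMod p → ZMod p defined by w j = j lies in the kernel of A, i.e. A.mulVec w = 0. -/
/-- Key computational step in Lemma 2.7 of Przytycki–Sokolov: a symmetric
circulant matrix over `ZMod p` (`p` an odd prime) whose row sums vanish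
annihilates the vector `(0, 1, 2, …, p-1)`. -/
theorem circulant_mulVec_id_eq_zero (p : ℕ) [Fact p.Prime] (hp : Odd p)
    (v : ZMod p → ZMod p) (hsym : ∀ k : ZMod p, v (-k) = v k)
    (hsum : ∑ k : ZMod p, v k = 0) :
    (Matrix.circulant v).mulVec (fun j : ZMod p => j) = 0 := by
  -- The function `k ↦ v k * k` is odd, so its sum equals its own negative; as `2 ≠ 0`, it vanishes.
  have hmoment : ∑ k : ZMod p, v k * k = 0 := by
    have hneg : ∑ k : ZMod p, v k * k = -∑ k : ZMod p, v k * k := by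
      rw [← Finset.sum_neg_distrib, ← Equiv.sum_comp (Equiv.neg (ZMod p))]
      simp [hsym]
    exact (ZMod.add_self_eq_zero_iff_eq_zero hp).mp (eq_neg_iff_add_eq_zero.mp hneg)
  ext i
  calc ∑ j : ZMod p, v (i - j) * j
      = ∑ k : ZMod p, v k * (i - k) := by
        rw [← Equiv.sum_comp (Equiv.subLeft i)]
        simp
    _ = 0 := by
        simp only [mul_sub, Finset.sum_sub_distrib, ← Finset.sum_mul, hsum, hmoment]
        simp
end

section
/- Let p be an odd prime and let v : ZMod p → ZMod p satisfy v (-k) = v k for all k, so that A = Matrix.circulant v (with entries A i j = v (i - j)) is a symmetric p×p circulant matrix over the field ZMod p. Then the nullity of A is not equal to 1; that is, the dimension over ZMod p of the kernel of the linear map x ↦ A.mulVec x is never equal to 1. -/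
/-!
The kernel `K` of a circulant matrix is invariant under the cyclic shift. If `K` is a line, the shift
acts on it by a scalar `c` with `c ^ p = 1`, hence `c = 1` since `c ^ p = c` in `ZMod p`; so `K` is
the line of constant vectors, and `∑ k, v k = 0`. Symmetry of `v` and `p` odd give
`∑ k, v k * k = 0`. Together these put the vector `j ↦ j` in `K`, although it is not constant.
-/

theorem circulant_mulVec_apply (p : ℕ) [Fact p.Prime] (v x : ZMod p → ZMod p) (i : ZMod p) :
    (Matrix.circulant v).mulVec x i = ∑ k, v k * x (i - k) := by
  rw [Matrix.mulVec, dotProduct, ← Equiv.sum_comp (Equiv.subLeft i)]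
  simp [Matrix.circulant_apply]

/-- The first moment of an even function vanishes in odd characteristic: negating the index
changes its sign. -/
theorem sum_mul_self_eq_zero (p : ℕ) [Fact p.Prime] (hp : Odd p)
    (v : ZMod p → ZMod p) (hsym : ∀ k : ZMod p, v (-k) = v k) : ∑ k, v k * k = 0 := by
  have h : ∑ k, v k * k = -∑ k, v k * k := by
    conv_lhs => rw [← Equiv.sum_comp (Equiv.neg (ZMod p))]
    simp [hsym]
  exact ((ZMod.neg_eq_self_iff _).1 h.symm).resolve_right fun h2 => by
    obtain ⟨m, hm⟩ := hp
    omega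

/-- Lemma 2.7 of Przytycki–Sokolov: a symmetric `p × p` circulant matrix over
the field `ZMod p`, `p` an odd prime, never has nullity exactly `1`. -/
theorem nullity_circulant_ne_one (p : ℕ) [Fact p.Prime] (hp : Odd p)
    (v : ZMod p → ZMod p) (hsym : ∀ k : ZMod p, v (-k) = v k) :
    Module.finrank (ZMod p) (LinearMap.ker (Matrix.circulant v).mulVecLin) ≠ 1 := by
  intro h
  have hker : ∀ x : ZMod p → ZMod p, x ∈ LinearMap.ker (Matrix.circulant v).mulVecLin ↔
      ∀ i, ∑ k, v k * x (i - k) = 0 := by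
    intro x
    rw [LinearMap.mem_ker, Matrix.mulVecLin_apply, funext_iff]
    simp only [circulant_mulVec_apply, Pi.zero_apply]
  obtain ⟨⟨x, hx⟩, hx0, hspan⟩ := finrank_eq_one_iff'.1 h
  have hspan' : ∀ y : ZMod p → ZMod p, (∀ i, ∑ k, v k * y (i - k) = 0) →
      ∃ c : ZMod p, ∀ i, c * x i = y i := by
    intro y hy
    obtain ⟨c, hc⟩ := hspan ⟨y, (hker y).2 hy⟩
    exact ⟨c, fun i => congrFun (congrArg Subtype.val hc) i⟩
  rw [hker] at hx
  obtain ⟨i₀, hi₀⟩ : ∃ i, x i ≠ 0 := by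
    by_contra! hzero
    exact hx0 (Subtype.ext (funext hzero))
  obtain ⟨c, hc⟩ := hspan' (fun i => x (i + 1)) fun i => by
    simpa only [sub_add_eq_add_sub] using hx (i + 1)
  have hpow : ∀ (n : ℕ) (i : ZMod p), x (i + n) = c ^ n * x i := by
    intro n
    induction n with
    | zero => simp
    | succ n ih =>
      intro i
      rw [Nat.cast_succ, ← add_assoc, ← hc, ih, pow_succ]
      ring
  have hc1 : c = 1 := by
    have := hpow p i₀
    rw [CharP.cast_eq_zero, add_zero, ZMod.pow_card] at this
    exact mul_right_cancel₀ hi₀ (by rw [← this, one_mul])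
  have hconst : ∀ i, x i = x 0 := by
    intro i
    have := hpow i.val 0
    rwa [hc1, one_pow, one_mul, zero_add, ZMod.natCast_zmod_val] at this
  have hsum : ∑ k, v k = 0 := by
    have := hx 0
    simp only [hconst (0 - _), ← Finset.sum_mul] at this
    exact (mul_eq_zero.1 this).resolve_right (hconst i₀ ▸ hi₀)
  obtain ⟨d, hd⟩ := hspan' id fun i => by
    simp only [id, mul_sub, Finset.sum_sub_distrib, ← Finset.sum_mul, hsum,
      sum_mul_self_eq_zero p hp v hsym, zero_mul, sub_zero]
  have h01 : (0 : ZMod p) = 1 := (hd 0).symm.trans (hconst 1 ▸ hd 1)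
  exact zero_ne_one h01
end

section
/- Let p be an odd prime, let m be a natural number, and for each i in Fin m let v i : ZMod p → ZMod p satisfy (v i) (-k) = (v i) k for all k. Let A be the block diagonal matrix (Matrix.blockDiagonal) whose i-th diagonal block is the symmetric circulant matrix Matrix.circulant (v i), so A is a square matrix over ZMod p indexed by ZMod p × Fin m. Then the nullity of A is not equal to 1; that is, the dimension over ZMod p of the kernel of the linear map x ↦ A.mulVec x is never equal to 1. -/
/-!
The kernel of the matrix is stable under the simultaneous cyclic shift of all blocks. If the kernel
is a line, the shift acts on it by a scalar `c`, and `c ^ p = 1` forces `c = 1` since `c ^ p = c` in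
`ZMod p`. Hence every kernel vector is constant on each block. A nonzero such vector exists, so some
block has vanishing row sum. For that block the vector `k ↦ k` also lies in the kernel
(`sum_mul_eq_zero_of_even`): because `v` is even and `p` is odd, its first moment `∑ l, v l * l` is
zero. This vector is not constant, a contradiction.
-/

lemma mem_ker_blockDiagonal_circulant_iff {p : ℕ} [NeZero p] {m : ℕ} (v : Fin m → ZMod p → ZMod p)
    (x : ZMod p × Fin m → ZMod p) :
    x ∈ LinearMap.ker
      (Matrix.blockDiagonal (fun i : Fin m => Matrix.circulant (v i))).mulVecLin ↔
    ∀ i j, ∑ k, v i (j - k) * x (k, i) = 0 := by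
  rw [LinearMap.mem_ker, Matrix.mulVecLin_apply, funext_iff, Prod.forall, forall_comm]
  simp [Matrix.mulVec, dotProduct, Fintype.sum_prod_type, Matrix.blockDiagonal_apply,
    Matrix.circulant_apply, ite_mul]

/-- The identity vector `k ↦ k` is killed by an even circulant matrix with vanishing row sum. -/
lemma sum_mul_eq_zero_of_even {p : ℕ} [Fact p.Prime] (hp : Odd p) (f : ZMod p → ZMod p)
    (hf : ∀ k, f (-k) = f k) (hs : ∑ k, f k = 0) (j : ZMod p) :
    ∑ k, f (j - k) * k = 0 := by
  have h2 : (2 : ZMod p) ≠ 0 := by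
    apply Ring.two_ne_zero
    rw [ZMod.ringChar_zmod_n]
    rintro rfl
    exact absurd hp (by decide)
  have hmoment : ∑ l, f l * l = 0 := by
    have h : ∑ l, f l * l = ∑ l, f (-l) * (-l) :=
      (Equiv.sum_comp (Equiv.neg (ZMod p)) (fun l => f l * l)).symm
    simp only [hf, mul_neg, Finset.sum_neg_distrib] at h
    have h' : 2 * ∑ l, f l * l = 0 := by linear_combination h
    exact (mul_eq_zero.mp h').resolve_left h2
  calc ∑ k, f (j - k) * k = ∑ l, f l * (j - l) := by
        rw [← (Equiv.subLeft j).sum_comp (fun l => f l * (j - l))]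
        simp
    _ = (∑ l, f l) * j - ∑ l, f l * l := by
        simp only [mul_sub, Finset.sum_sub_distrib, Finset.sum_mul]
    _ = 0 := by rw [hs, hmoment]; simp

/-- Linear-algebra core of Proposition 2.10 of Przytycki–Sokolov: a block
diagonal matrix over `ZMod p` (`p` an odd prime) whose diagonal blocks are
symmetric `p × p` circulant matrices never has nullity exactly `1`. -/
theorem nullity_blockDiagonal_circulant_ne_one (p : ℕ) [Fact p.Prime] (hp : Odd p)
    (m : ℕ) (v : Fin m → ZMod p → ZMod p)
    (hsym : ∀ i : Fin m, ∀ k : ZMod p, v i (-k) = v i k) :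
    Module.finrank (ZMod p)
      (LinearMap.ker
        (Matrix.blockDiagonal (fun i : Fin m => Matrix.circulant (v i))).mulVecLin) ≠ 1 := by
  intro h
  obtain ⟨⟨w, hw⟩, hw0, hspan⟩ := finrank_eq_one_iff'.mp h
  have hline : ∀ x, (∀ i j, ∑ k, v i (j - k) * x (k, i) = 0) → ∃ c : ZMod p, c • w = x := by
    intro x hx
    obtain ⟨c, hc⟩ := hspan ⟨x, (mem_ker_blockDiagonal_circulant_iff v x).mpr hx⟩
    exact ⟨c, congrArg Subtype.val hc⟩
  rw [mem_ker_blockDiagonal_circulant_iff] at hw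
  obtain ⟨c, hc⟩ := hline (fun q => w (q.1 + 1, q.2)) (by
    intro i j
    rw [← hw i (j + 1),
      ← Equiv.sum_comp (Equiv.addRight (1 : ZMod p)) (fun k => v i (j + 1 - k) * w (k, i))]
    simp)
  have hstep : ∀ j i, w (j + 1, i) = c * w (j, i) := fun j i => (congrFun hc (j, i)).symm
  have hiter : ∀ (n : ℕ) i j, w (j + n, i) = c ^ n * w (j, i) := by
    intro n i j
    induction n with
    | zero => simp
    | succ n ih => rw [Nat.cast_succ, ← add_assoc, hstep, ih]; ring
  have hshift : ∀ j i, w (j + 1, i) = w (j, i) := by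
    intro j i
    have := hiter p i j
    rw [ZMod.pow_card, CharP.cast_eq_zero, add_zero] at this
    rw [hstep, ← this]
  have hconst : ∀ j i, w (j, i) = w (0, i) := by
    intro j i
    have hn : ∀ n : ℕ, w ((n : ZMod p), i) = w (0, i) := by
      intro n
      induction n with
      | zero => simp
      | succ n ih => rw [Nat.cast_succ, hshift, ih]
    simpa using hn j.val
  obtain ⟨i, hi⟩ : ∃ i, w (0, i) ≠ 0 := by
    by_contra! hall
    apply hw0
    ext ⟨j, i⟩
    simp [hconst j i, hall i]
  have hs : ∑ k, v i k = 0 := by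
    have h0 := hw i 0
    simp only [hconst _ i, zero_sub, hsym, ← Finset.sum_mul] at h0
    exact (mul_eq_zero.mp h0).resolve_right hi
  -- The identity vector on block `i`, extended by zero, is in the kernel but is not constant there.
  obtain ⟨d, hd⟩ := hline (fun q => if q.2 = i then q.1 else 0) (by
    intro i' j
    by_cases hii : i' = i
    · subst hii
      simpa using sum_mul_eq_zero_of_even hp (v i') (hsym i') hs j
    · simp [hii])
  have hd0 := congrFun hd (0, i)
  have hd1 := congrFun hd (1, i)
  simp only [Pi.smul_apply, if_true] at hd0 hd1
  rw [hconst 1 i, hd0] at hd1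
  exact zero_ne_one hd1
end

section
/- Let a and b be integers with a² ≠ b², let g = gcd(a, b) > 0 and let m = |a² − b²| / g (a positive integer). Suppose 16 does not divide g and 16 does not divide m. Then the 2-adic valuation of g equals 1 if and only if the 2-adic valuation of m equals 1, and the 2-adic valuation of g equals 2 if and only if the 2-adic valuation of m equals 2. -/
/-!
Write `a = g x` and `b = g y` with `x`, `y` coprime, so that `m = g n` with `n = |x² − y²|`.
As `x` and `y` are not both even, `n` is odd or divisible by `8` (`odd_or_eight_dvd_sq_sub_sq`).
If `n` is odd, `g` and `m` have the same 2-adic valuation. If `8 ∣ n`, then `g` is odd because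
`16 ∤ g n`, so the valuation of `g` is `0` while that of `m` is at least `3`, and all four
equalities fail.
-/

/-- A difference of two squares of coprime integers is odd if their parities differ; otherwise
both are odd, and odd squares are `1` modulo `8`. -/
theorem odd_or_eight_dvd_sq_sub_sq (x y : ℤ) (h : Int.gcd x y = 1) :
    ¬ (2 ∣ (x ^ 2 - y ^ 2)) ∨ 8 ∣ (x ^ 2 - y ^ 2) := by
  rcases Int.even_or_odd x with hx | hx <;> rcases Int.even_or_odd y with hy | hy
  · have h2 : (2 : ℤ) ∣ Int.gcd x y := Int.dvd_coe_gcd hx.two_dvd hy.two_dvd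
    rw [h] at h2
    norm_num at h2
  · left
    rw [← even_iff_two_dvd]
    simp [Int.even_sub, Int.even_pow, hx, hy]
  · left
    rw [← even_iff_two_dvd]
    simp [Int.even_sub, Int.even_pow, hx, hy]
  · right
    have hx8 := Int.eight_dvd_sq_sub_one_of_odd hx
    have hy8 := Int.eight_dvd_sq_sub_one_of_odd hy
    omega

/-- Arithmetic core of Theorem 2.2 of Przytycki–Sokolov: with
`g = gcd(a, b)` and `m = |a² − b²| / g`, if neither `g` nor `m` is divisible
by `16`, then the 2-adic valuations of `g` and of `m` are simultaneously `1`
and simultaneously `2`. -/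
theorem two_adic_valuations_match (a b : ℤ) (hab : a ^ 2 ≠ b ^ 2)
    (g m : ℕ) (hg : g = Int.gcd a b) (hm : m = (a ^ 2 - b ^ 2).natAbs / g)
    (h16g : ¬ (16 ∣ g)) (h16m : ¬ (16 ∣ m)) :
    (padicValNat 2 g = 1 ↔ padicValNat 2 m = 1) ∧
      (padicValNat 2 g = 2 ↔ padicValNat 2 m = 2) := by
  have hg0 : 0 < g := by
    rw [hg, Int.gcd_pos_iff]
    by_contra! h
    exact hab (by rw [h.1, h.2])
  obtain ⟨x, y, hxy, hx, hy⟩ := Int.exists_gcd_one (hg ▸ hg0)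
  rw [← hg] at hx hy
  obtain ⟨n, hn⟩ : ∃ n, n = (x ^ 2 - y ^ 2).natAbs := ⟨_, rfl⟩
  have hmn : m = g * n := by
    have h : a ^ 2 - b ^ 2 = g * (g * (x ^ 2 - y ^ 2)) := by rw [hx, hy]; ring
    rw [hm, h, Int.natAbs_mul, Int.natAbs_mul, Int.natAbs_natCast, ← hn,
      Nat.mul_div_cancel_left _ hg0]
  have hn0 : n ≠ 0 := by
    rw [hn, Int.natAbs_ne_zero, sub_ne_zero]
    intro h
    exact hab (by rw [hx, hy, mul_pow, mul_pow, h])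
  have hv : padicValNat 2 m = padicValNat 2 g + padicValNat 2 n := by
    rw [hmn, padicValNat.mul hg0.ne' hn0]
  rcases odd_or_eight_dvd_sq_sub_sq x y hxy with h | h
  · have h2 : padicValNat 2 n = 0 := padicValNat.eq_zero_of_not_dvd (by omega)
    omega
  · have h8 : 2 ^ 3 ∣ n := by omega
    have h3 : 3 ≤ padicValNat 2 n := (padicValNat_dvd_iff_le hn0).1 h8
    have hgodd : ¬ 2 ∣ g := fun h2 => h16m (hmn ▸ mul_dvd_mul h2 h8)
    have hgv : padicValNat 2 g = 0 := padicValNat.eq_zero_of_not_dvd hgodd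
    omega
end

section
/- Let a and b be integers with a² ≠ b², let g = gcd(a, b) > 0 and let m = |a² − b²| / g (a positive integer). Suppose 8 does not divide g and 8 does not divide m. Then g is even if and only if m is even. -/
/-!
Write `a = g x`, `b = g y` with `x`, `y` coprime, so that `m = g |x² - y²|`; in particular `m` is
even when `g` is. If `m` were even and `g` odd, then `x² - y²` would be even, so the coprime
integers `x`, `y` would both be odd and `8` would divide `x² - y²`, hence `m`.
-/

/-- Coprime `x`, `y` of equal parity are both odd, and odd squares are `1` modulo `8`. -/
lemma eight_dvd_sq_sub_sq_of_coprime_of_even (x y : ℤ) (hxy : Int.gcd x y = 1)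
    (h : Even (x ^ 2 - y ^ 2)) : (8 : ℤ) ∣ x ^ 2 - y ^ 2 := by
  have hpar : Even x ↔ Even y := by
    simpa [Int.even_sub, Int.even_pow] using h
  by_cases hx : Even x
  · have h2 : 2 ∣ Int.gcd x y :=
      Int.dvd_gcd hx.two_dvd (hpar.1 hx).two_dvd
    omega
  · have hy : ¬ Even y := fun hy => hx (hpar.2 hy)
    have h1 := Int.eight_dvd_sq_sub_one_of_odd (Int.not_even_iff_odd.1 hx)
    have h2 := Int.eight_dvd_sq_sub_one_of_odd (Int.not_even_iff_odd.1 hy)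
    omega

/-- Arithmetic core of Corollary 2.13 of Przytycki–Sokolov: with
`g = gcd(a, b)` and `m = |a² − b²| / g`, if neither `g` nor `m` is divisible
by `8`, then `g` and `m` have the same parity. -/
theorem even_iff_even_of_not_eight_dvd (a b : ℤ) (hab : a ^ 2 ≠ b ^ 2)
    (g m : ℕ) (hg : g = Int.gcd a b) (hm : m = (a ^ 2 - b ^ 2).natAbs / g)
    (h8g : ¬ (8 ∣ g)) (h8m : ¬ (8 ∣ m)) :
    (Even g ↔ Even m) := by
  have hpos : 0 < g := by
    rcases Nat.eq_zero_or_pos g with h | h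
    · exact absurd (h ▸ dvd_zero 8) h8g
    · exact h
  obtain ⟨x, y, hxy, hx, hy⟩ := Int.exists_gcd_one (hg ▸ hpos)
  rw [← hg] at hx hy
  -- Dividing `a` and `b` by their gcd gives `m = g |x² - y²|` with `x`, `y` coprime.
  have hmg : m = g * (x ^ 2 - y ^ 2).natAbs := by
    have h : a ^ 2 - b ^ 2 = g * (g * (x ^ 2 - y ^ 2)) := by
      rw [hx, hy]; ring
    rw [hm, h, Int.natAbs_mul, Int.natAbs_mul, Int.natAbs_natCast, Nat.mul_div_cancel_left _ hpos]
  refine ⟨fun h => hmg ▸ h.mul_right _, fun h => ?_⟩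
  rw [hmg, Nat.even_mul, Int.natAbs_even] at h
  refine h.resolve_right fun he => h8m ?_
  rw [hmg]
  exact Dvd.dvd.mul_left
    (Int.natCast_dvd.1 (eight_dvd_sq_sub_sq_of_coprime_of_even x y hxy he)) g
end
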